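/- Let n ≥ 1, let λ : Fin n → ℝ, and for smooth functions v : ℂⁿ → ℂ define ∂̄_j v = ∂v/∂z̄_j + λ_j z_j v. Fix an index k and suppose there exist indices r, s, both different from k, such that λ_r < 0 and λ_s > 0. Then for every smooth compactly supported v : ℂⁿ → ℂ, ∑_{j ≠ k} ∫_{ℂⁿ} |∂̄_j v|² e^{|z|²} dλ(z) ≥ ∫_{ℂⁿ} |v|² e^{|z|²} dλ(z). -/

import Mathlib

/-!
For the weighted inner product `⟨f, g⟩ = ∫ f̄ g e^{|z|²}`, the formal adjoint of `∂̄_j` is `δ_j`,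
and the two satisfy `δ_j ∂̄_j = ∂̄_j δ_j + (1 - 2λ_j)`. Pairing with `v` gives
`‖∂̄_j v‖² = ‖δ_j v‖² + (1 - 2λ_j) ‖v‖²`, so a single index with `λ_j ≤ 0` already controls `‖v‖²`.
-/

open MeasureTheory Complex Finset

noncomputable section

/-- Wirtinger derivative `∂v/∂z̄_j = (1/2)(∂/∂x_j + i ∂/∂y_j) v` on `ℂⁿ`. -/
def wbar {n : ℕ} (j : Fin n) (v : (Fin n → ℂ) → ℂ) (z : Fin n → ℂ) : ℂ :=
  (1 / 2 : ℂ) * (fderiv ℝ v z (Pi.single j 1) + Complex.I * fderiv ℝ v z (Pi.single j Complex.I))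

/-- Wirtinger derivative `∂v/∂z_j = (1/2)(∂/∂x_j − i ∂/∂y_j) v` on `ℂⁿ`. -/
def whol {n : ℕ} (j : Fin n) (v : (Fin n → ℂ) → ℂ) (z : Fin n → ℂ) : ℂ :=
  (1 / 2 : ℂ) * (fderiv ℝ v z (Pi.single j 1) - Complex.I * fderiv ℝ v z (Pi.single j Complex.I))

/-- The operator `∂̄_j v = ∂v/∂z̄_j + λ_j z_j v`. -/
def dbarOp {n : ℕ} (lam : Fin n → ℝ) (j : Fin n) (v : (Fin n → ℂ) → ℂ) (z : Fin n → ℂ) : ℂ :=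
  wbar j v z + (lam j : ℂ) * z j * v z

/-- The operator `δ_j v = −∂v/∂z_j + λ_j z̄_j v − z̄_j v`. -/
def deltaOp {n : ℕ} (lam : Fin n → ℝ) (j : Fin n) (v : (Fin n → ℂ) → ℂ) (z : Fin n → ℂ) : ℂ :=
  - whol j v z + (lam j : ℂ) * (starRingEnd ℂ) (z j) * v z - (starRingEnd ℂ) (z j) * v z

/-- The weight `e^{|z|²}`. -/
def wgt {n : ℕ} (z : Fin n → ℂ) : ℝ := Real.exp (∑ j, Complex.normSq (z j))

open scoped ComplexConjugate

section FDeriv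

variable {E F : Type*} [NormedAddCommGroup E] [NormedSpace ℝ E] [NormedAddCommGroup F]
  [NormedSpace ℝ F]

lemma differentiableAt_fderiv_apply {f : E → F} {x : E} (hf : ContDiffAt ℝ 2 f x) (e : E) :
    DifferentiableAt ℝ (fun y => fderiv ℝ f y e) x :=
  ((hf.fderiv_right (m := 1) one_add_one_eq_two.le).differentiableAt one_ne_zero).clm_apply
    (differentiableAt_const e)

lemma fderiv_fderiv_apply_comm {f : E → F} {x : E} (hf : ContDiffAt ℝ 2 f x) (e e' : E) :
    fderiv ℝ (fun y => fderiv ℝ f y e) x e' = fderiv ℝ (fun y => fderiv ℝ f y e') x e := by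
  have hf' : DifferentiableAt ℝ (fderiv ℝ f) x :=
    (hf.fderiv_right (m := 1) one_add_one_eq_two.le).differentiableAt one_ne_zero
  rw [fderiv_clm_apply hf' (differentiableAt_const e),
    fderiv_clm_apply hf' (differentiableAt_const e')]
  simpa using hf.isSymmSndFDerivAt (by simp) e' e

variable [MeasurableSpace E] [BorelSpace E] {μ : Measure E}

lemma integrable_fderiv_apply [IsFiniteMeasureOnCompacts μ] {f : E → F} (hf : ContDiff ℝ 1 f)
    (hfc : HasCompactSupport f) (e : E) : Integrable (fun x => fderiv ℝ f x e) μ :=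
  ((hf.continuous_fderiv one_ne_zero).clm_apply continuous_const).integrable_of_hasCompactSupport
    (hfc.fderiv_apply ℝ e)

lemma integral_fderiv_apply_eq_zero [FiniteDimensional ℝ E] [μ.IsAddHaarMeasure] {f : E → F}
    (hf : ContDiff ℝ 1 f) (hfc : HasCompactSupport f) (e : E) : ∫ x, fderiv ℝ f x e ∂μ = 0 := by
  simpa using integral_smul_fderiv_eq_neg_fderiv_smul_of_integrable (μ := μ) (v := e)
    (f := fun _ : E => (1 : ℝ)) (g := f) (by simp)
    (by simpa using integrable_fderiv_apply hf hfc e)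
    (by simpa using hf.continuous.integrable_of_hasCompactSupport hfc)
    (fun _ _ => differentiableAt_const _) (fun x _ => hf.differentiable one_ne_zero x)

end FDeriv

section Wirtinger

variable {n : ℕ} {f g : (Fin n → ℂ) → ℂ} {z : Fin n → ℂ}

lemma wbar_sub (j : Fin n) (hf : DifferentiableAt ℝ f z) (hg : DifferentiableAt ℝ g z) :
    wbar j (fun w => f w - g w) z = wbar j f z - wbar j g z := by
  simp only [wbar, fderiv_fun_sub hf hg, sub_apply]
  ring

lemma whol_add (j : Fin n) (hf : DifferentiableAt ℝ f z) (hg : DifferentiableAt ℝ g z) :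
    whol j (fun w => f w + g w) z = whol j f z + whol j g z := by
  simp only [whol, fderiv_fun_add hf hg, add_apply]
  ring

lemma wbar_const_mul (j : Fin n) (c : ℂ) (hf : DifferentiableAt ℝ f z) :
    wbar j (fun w => c * f w) z = c * wbar j f z := by
  simp only [wbar, fderiv_const_mul hf, smul_apply, smul_eq_mul]
  ring

lemma whol_const_mul (j : Fin n) (c : ℂ) (hf : DifferentiableAt ℝ f z) :
    whol j (fun w => c * f w) z = c * whol j f z := by
  simp only [whol, fderiv_const_mul hf, smul_apply, smul_eq_mul]
  ring

lemma wbar_mul (j : Fin n) (hf : DifferentiableAt ℝ f z) (hg : DifferentiableAt ℝ g z) :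
    wbar j (fun w => f w * g w) z = f z * wbar j g z + wbar j f z * g z := by
  simp only [wbar, fderiv_fun_mul hf hg, add_apply,
    smul_apply, smul_eq_mul]
  ring

lemma whol_mul (j : Fin n) (hf : DifferentiableAt ℝ f z) (hg : DifferentiableAt ℝ g z) :
    whol j (fun w => f w * g w) z = f z * whol j g z + whol j f z * g z := by
  simp only [whol, fderiv_fun_mul hf hg, add_apply,
    smul_apply, smul_eq_mul]
  ring

lemma wbar_conj (j : Fin n) (f : (Fin n → ℂ) → ℂ) (z : Fin n → ℂ) :
    wbar j (fun w => conj (f w)) z = conj (whol j f z) := by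
  have h : fderiv ℝ (fun w => conj (f w)) z = (conjCLE : ℂ →L[ℝ] ℂ) ∘L fderiv ℝ f z :=
    conjCLE.comp_fderiv
  simp [wbar, whol, h, map_ofNat]

lemma wbar_cexp (j : Fin n) (hf : DifferentiableAt ℝ f z) :
    wbar j (fun w => cexp (f w)) z = cexp (f z) * wbar j f z := by
  simp only [wbar, hf.hasFDerivAt.cexp.fderiv, smul_apply, smul_eq_mul]
  ring

lemma wbar_sum {ι : Type*} (j : Fin n) (s : Finset ι) {f : ι → (Fin n → ℂ) → ℂ}
    (hf : ∀ i ∈ s, DifferentiableAt ℝ (f i) z) :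
    wbar j (fun w => ∑ i ∈ s, f i w) z = ∑ i ∈ s, wbar j (f i) z := by
  simp only [wbar, fderiv_fun_sum hf, _root_.sum_apply, mul_sum, ← sum_add_distrib]

lemma fderiv_coord (i : Fin n) (z e : Fin n → ℂ) :
    fderiv ℝ (fun w : Fin n → ℂ => w i) z e = e i := by
  simp [(hasFDerivAt_apply (𝕜 := ℝ) i z).fderiv]

lemma wbar_coord (j i : Fin n) (z : Fin n → ℂ) : wbar j (fun w => w i) z = 0 := by
  rcases eq_or_ne i j with rfl | hij
  · simp [wbar, fderiv_coord]
  · simp [wbar, fderiv_coord, hij]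

lemma whol_coord (j i : Fin n) (z : Fin n → ℂ) :
    whol j (fun w => w i) z = if i = j then 1 else 0 := by
  rcases eq_or_ne i j with rfl | hij
  · norm_num [whol, fderiv_coord]
  · simp [whol, fderiv_coord, hij]

lemma wbar_conj_coord (j i : Fin n) (z : Fin n → ℂ) :
    wbar j (fun w => conj (w i)) z = if i = j then 1 else 0 := by
  rw [wbar_conj, whol_coord]
  split_ifs <;> simp

lemma differentiableAt_wbar (j : Fin n) (hf : ContDiffAt ℝ 2 f z) :
    DifferentiableAt ℝ (wbar j f) z :=
  ((differentiableAt_fderiv_apply hf _).fun_add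
    ((differentiableAt_fderiv_apply hf _).const_mul I)).const_mul _

lemma differentiableAt_whol (j : Fin n) (hf : ContDiffAt ℝ 2 f z) :
    DifferentiableAt ℝ (whol j f) z :=
  ((differentiableAt_fderiv_apply hf _).fun_sub
    ((differentiableAt_fderiv_apply hf _).const_mul I)).const_mul _

lemma fderiv_whol (j : Fin n) (hf : ContDiffAt ℝ 2 f z) (e : Fin n → ℂ) :
    fderiv ℝ (whol j f) z e = whol j (fun w => fderiv ℝ f w e) z := by
  have hD := differentiableAt_fderiv_apply hf
  unfold whol
  rw [fderiv_const_mul ((hD _).fun_sub ((hD _).const_mul I)),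
    fderiv_fun_sub (hD _) ((hD _).const_mul I), fderiv_const_mul (hD _)]
  simp only [smul_apply, sub_apply, smul_eq_mul, fderiv_fderiv_apply_comm hf _ e]

lemma wbar_whol_comm (i j : Fin n) (hf : ContDiffAt ℝ 2 f z) :
    wbar i (whol j f) z = whol j (wbar i f) z := by
  have hD := differentiableAt_fderiv_apply hf
  rw [wbar, fderiv_whol j hf, fderiv_whol j hf]
  unfold wbar
  rw [whol_const_mul j _ ((hD _).fun_add ((hD _).const_mul I)),
    whol_add j (hD _) ((hD _).const_mul I), whol_const_mul j I (hD _)]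

lemma contDiff_wbar {m k : WithTop ℕ∞} (j : Fin n) (hf : ContDiff ℝ k f) (hmk : m + 1 ≤ k) :
    ContDiff ℝ m (wbar j f) := by
  have hD (e : Fin n → ℂ) : ContDiff ℝ m fun w => fderiv ℝ f w e :=
    (hf.fderiv_right hmk).clm_apply contDiff_const
  exact contDiff_const.mul ((hD _).add (contDiff_const.mul (hD _)))

lemma contDiff_whol {m k : WithTop ℕ∞} (j : Fin n) (hf : ContDiff ℝ k f) (hmk : m + 1 ≤ k) :
    ContDiff ℝ m (whol j f) := by
  have hD (e : Fin n → ℂ) : ContDiff ℝ m fun w => fderiv ℝ f w e :=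
    (hf.fderiv_right hmk).clm_apply contDiff_const
  exact contDiff_const.mul ((hD _).sub (contDiff_const.mul (hD _)))

lemma hasCompactSupport_wbar (j : Fin n) (hf : HasCompactSupport f) :
    HasCompactSupport (wbar j f) :=
  ((hf.fderiv_apply ℝ _).add (hf.fderiv_apply ℝ _).mul_left).mul_left

lemma hasCompactSupport_whol (j : Fin n) (hf : HasCompactSupport f) :
    HasCompactSupport (whol j f) :=
  ((hf.fderiv_apply ℝ _).sub (hf.fderiv_apply ℝ _).mul_left).mul_left

lemma integral_wbar_eq_zero (j : Fin n) (hf : ContDiff ℝ 1 f) (hfc : HasCompactSupport f) :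
    ∫ z, wbar j f z = 0 := by
  have hint := integrable_fderiv_apply (μ := volume) hf hfc
  unfold wbar
  rw [integral_const_mul, integral_add (hint _) ((hint _).const_mul I), integral_const_mul]
  simp [integral_fderiv_apply_eq_zero hf hfc]

end Wirtinger

section Weight

variable {n : ℕ}

lemma contDiff_wgt {m : WithTop ℕ∞} : ContDiff ℝ m (wgt : (Fin n → ℂ) → ℝ) := by
  have hsq (i : Fin n) : ContDiff ℝ m fun z : Fin n → ℂ => normSq (z i) := by
    simpa only [normSq_eq_norm_sq] using (contDiff_apply ℝ ℂ i).norm_sq ℝ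
  exact (ContDiff.sum fun i _ => hsq i).exp

lemma ofReal_wgt (z : Fin n → ℂ) : (wgt z : ℂ) = cexp (∑ i, z i * conj (z i)) := by
  simp [wgt, mul_conj]

lemma wbar_wgt (j : Fin n) (z : Fin n → ℂ) :
    wbar j (fun w => (wgt w : ℂ)) z = z j * wgt z := by
  have hcoord (i : Fin n) : DifferentiableAt ℝ (fun w : Fin n → ℂ => w i) z :=
    differentiableAt_apply i z
  have hconj (i : Fin n) : DifferentiableAt ℝ (fun w : Fin n → ℂ => conj (w i)) z :=
    (hcoord i).star
  have hsq (i : Fin n) : DifferentiableAt ℝ (fun w : Fin n → ℂ => w i * conj (w i)) z :=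
    (hcoord i).fun_mul (hconj i)
  have hexponent : wbar j (fun w => ∑ i, w i * conj (w i)) z = z j := by
    rw [wbar_sum j univ fun i _ => hsq i]
    simp [fun i => wbar_mul j (hcoord i) (hconj i), wbar_coord, wbar_conj_coord]
  simp_rw [ofReal_wgt]
  rw [wbar_cexp j (DifferentiableAt.fun_sum fun i _ => hsq i), hexponent, mul_comm]

end Weight

section WeightedInner

variable {n : ℕ} {f g h : (Fin n → ℂ) → ℂ}

/-- The inner product `⟨f, g⟩ = ∫ f̄ g e^{|z|²}` of the weighted space `L²(ℂⁿ, e^{|z|²})`,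
conjugate-linear in the first argument as in Mathlib. It takes the junk value `0` when the integrand
is not integrable. -/
def wgtInner (f g : (Fin n → ℂ) → ℂ) : ℂ :=
  ∫ z, conj (f z) * g z * wgt z

lemma conj_wgtInner (f g : (Fin n → ℂ) → ℂ) : conj (wgtInner f g) = wgtInner g f := by
  simp only [wgtInner, ← integral_conj, map_mul, conj_conj, conj_ofReal, mul_comm (f _)]

lemma wgtInner_self (f : (Fin n → ℂ) → ℂ) :
    wgtInner f f = (∫ z, ‖f z‖ ^ 2 * wgt z : ℝ) := by
  simp only [wgtInner, conj_mul', ← integral_complex_ofReal, ofReal_mul, ofReal_pow]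

lemma integral_norm_sq_mul_wgt_nonneg (f : (Fin n → ℂ) → ℂ) : 0 ≤ ∫ z, ‖f z‖ ^ 2 * wgt z :=
  integral_nonneg fun _ => mul_nonneg (sq_nonneg _) (Real.exp_nonneg _)

lemma integrable_conj_mul_mul_wgt (hf : Continuous f) (hfc : HasCompactSupport f)
    (hg : Continuous g) : Integrable fun z => conj (f z) * g z * (wgt z : ℂ) := by
  have hwgt : Continuous fun z : Fin n → ℂ => (wgt z : ℂ) :=
    continuous_ofReal.comp (contDiff_wgt (m := 0)).continuous
  exact (((continuous_conj.comp hf).mul hg).mul hwgt).integrable_of_hasCompactSupport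
    ((hfc.comp_left (map_zero conj)).mul_right.mul_right)

lemma wgtInner_add_const_mul_right (c : ℂ) (hf : Continuous f) (hfc : HasCompactSupport f)
    (hg : Continuous g) (hh : Continuous h) :
    wgtInner f (fun z => g z + c * h z) = wgtInner f g + c * wgtInner f h := by
  rw [wgtInner, wgtInner, wgtInner, ← integral_const_mul,
    ← integral_add (integrable_conj_mul_mul_wgt hf hfc hg)
      ((integrable_conj_mul_mul_wgt hf hfc hh).const_mul c)]
  congr with z
  ring

end WeightedInner

section DbarDelta

variable {n : ℕ} (lam : Fin n → ℝ) (j : Fin n) {f g v : (Fin n → ℂ) → ℂ} {z : Fin n → ℂ}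

lemma contDiff_dbarOp {m k : WithTop ℕ∞} (hf : ContDiff ℝ k f) (hmk : m + 1 ≤ k) :
    ContDiff ℝ m (dbarOp lam j f) :=
  (contDiff_wbar j hf hmk).add
    ((contDiff_const.mul (contDiff_apply ℝ ℂ j)).mul (hf.of_le (le_self_add.trans hmk)))

lemma contDiff_deltaOp {m k : WithTop ℕ∞} (hf : ContDiff ℝ k f) (hmk : m + 1 ≤ k) :
    ContDiff ℝ m (deltaOp lam j f) := by
  have hconj : ContDiff ℝ m fun w : Fin n → ℂ => conj (w j) :=
    conjCLE.contDiff.comp (contDiff_apply ℝ ℂ j)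
  have hfm : ContDiff ℝ m f := hf.of_le (le_self_add.trans hmk)
  exact ((contDiff_whol j hf hmk).neg.add ((contDiff_const.mul hconj).mul hfm)).sub (hconj.mul hfm)

lemma continuous_dbarOp (hf : ContDiff ℝ 1 f) : Continuous (dbarOp lam j f) :=
  (contDiff_dbarOp (m := 0) lam j hf (zero_add 1).le).continuous

lemma continuous_deltaOp (hf : ContDiff ℝ 1 f) : Continuous (deltaOp lam j f) :=
  (contDiff_deltaOp (m := 0) lam j hf (zero_add 1).le).continuous

lemma hasCompactSupport_dbarOp (hf : HasCompactSupport f) :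
    HasCompactSupport (dbarOp lam j f) :=
  (hasCompactSupport_wbar j hf).add hf.mul_left

lemma hasCompactSupport_deltaOp (hf : HasCompactSupport f) :
    HasCompactSupport (deltaOp lam j f) :=
  ((hasCompactSupport_whol j hf).neg.add hf.mul_left).sub hf.mul_left

lemma wbar_conj_mul_mul_wgt (hf : DifferentiableAt ℝ f z) (hg : DifferentiableAt ℝ g z) :
    wbar j (fun w => conj (f w) * g w * (wgt w : ℂ)) z
      = conj (f z) * dbarOp lam j g z * wgt z - conj (deltaOp lam j f z) * g z * wgt z := by
  have hconj : DifferentiableAt ℝ (fun w => conj (f w)) z := hf.star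
  have hwgt : DifferentiableAt ℝ (fun w : Fin n → ℂ => (wgt w : ℂ)) z :=
    (ofRealCLM.contDiff.comp contDiff_wgt).differentiable one_ne_zero z
  rw [wbar_mul j (hconj.fun_mul hg) hwgt, wbar_mul j hconj hg, wbar_conj, wbar_wgt]
  simp only [dbarOp, deltaOp, map_sub, map_add, map_neg, map_mul, conj_conj, conj_ofReal]
  ring

theorem wgtInner_dbarOp_right (hf : ContDiff ℝ 1 f) (hfc : HasCompactSupport f)
    (hg : ContDiff ℝ 1 g) :
    wgtInner f (dbarOp lam j g) = wgtInner (deltaOp lam j f) g := by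
  have hprod : ContDiff ℝ 1 fun z => conj (f z) * g z * (wgt z : ℂ) :=
    ((conjCLE.contDiff.comp hf).mul hg).mul (ofRealCLM.contDiff.comp contDiff_wgt)
  have hprodc : HasCompactSupport fun z => conj (f z) * g z * (wgt z : ℂ) :=
    (hfc.comp_left (map_zero conj)).mul_right.mul_right
  have hdiv := integral_wbar_eq_zero j hprod hprodc
  simp only [wbar_conj_mul_mul_wgt lam j (hf.differentiable one_ne_zero _)
    (hg.differentiable one_ne_zero _)] at hdiv
  rw [integral_sub
    (integrable_conj_mul_mul_wgt hf.continuous hfc (continuous_dbarOp lam j hg))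
    (integrable_conj_mul_mul_wgt (continuous_deltaOp lam j hf)
      (hasCompactSupport_deltaOp lam j hfc) hg.continuous)] at hdiv
  exact sub_eq_zero.1 hdiv

theorem wgtInner_dbarOp_left (hf : ContDiff ℝ 1 f) (hg : ContDiff ℝ 1 g)
    (hgc : HasCompactSupport g) :
    wgtInner (dbarOp lam j f) g = wgtInner f (deltaOp lam j g) := by
  rw [← conj_wgtInner, wgtInner_dbarOp_right lam j hg hgc hf, conj_wgtInner]

lemma wbar_deltaOp (hv : ContDiffAt ℝ 2 v z) :
    wbar j (deltaOp lam j v) z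
      = (lam j - 1) * (v z + conj (z j) * wbar j v z) - wbar j (whol j v) z := by
  have hvd : DifferentiableAt ℝ v z := hv.differentiableAt two_ne_zero
  have hconj : DifferentiableAt ℝ (fun w : Fin n → ℂ => conj (w j)) z :=
    (differentiableAt_apply j z).star
  have hdelta : deltaOp lam j v
      = fun w => ((lam j : ℂ) - 1) * (conj (w j) * v w) - whol j v w := by
    ext w
    rw [deltaOp]
    ring
  rw [hdelta, wbar_sub j ((hconj.fun_mul hvd).const_mul _) (differentiableAt_whol j hv),
    wbar_const_mul j _ (hconj.fun_mul hvd), wbar_mul j hconj hvd, wbar_conj_coord, if_pos rfl]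
  ring

lemma whol_dbarOp (hv : ContDiffAt ℝ 2 v z) :
    whol j (dbarOp lam j v) z = whol j (wbar j v) z + lam j * (v z + z j * whol j v z) := by
  have hvd : DifferentiableAt ℝ v z := hv.differentiableAt two_ne_zero
  have hcoord : DifferentiableAt ℝ (fun w : Fin n → ℂ => w j) z := differentiableAt_apply j z
  have hdbar : dbarOp lam j v = fun w => wbar j v w + (lam j : ℂ) * (w j * v w) := by
    ext w
    rw [dbarOp, mul_assoc]
  rw [hdbar, whol_add j (differentiableAt_wbar j hv) ((hcoord.fun_mul hvd).const_mul _),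
    whol_const_mul j _ (hcoord.fun_mul hvd), whol_mul j hcoord hvd, whol_coord, if_pos rfl]
  ring

theorem deltaOp_dbarOp (hv : ContDiffAt ℝ 2 v z) :
    deltaOp lam j (dbarOp lam j v) z
      = dbarOp lam j (deltaOp lam j v) z + (1 - 2 * lam j) * v z := by
  rw [deltaOp, whol_dbarOp lam j hv, dbarOp.eq_def lam j (deltaOp lam j v),
    wbar_deltaOp lam j hv, wbar_whol_comm j j hv, dbarOp, deltaOp]
  ring

theorem integral_norm_sq_dbarOp (hv : ContDiff ℝ 2 v) (hvc : HasCompactSupport v) :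
    ∫ z, ‖dbarOp lam j v z‖ ^ 2 * wgt z
      = (∫ z, ‖deltaOp lam j v z‖ ^ 2 * wgt z)
        + (1 - 2 * lam j) * ∫ z, ‖v z‖ ^ 2 * wgt z := by
  have hv₁ : ContDiff ℝ 1 v := hv.of_le one_le_two
  have hdbar : ContDiff ℝ 1 (dbarOp lam j v) := contDiff_dbarOp lam j hv one_add_one_eq_two.le
  have hdelta : ContDiff ℝ 1 (deltaOp lam j v) := contDiff_deltaOp lam j hv one_add_one_eq_two.le
  have key : wgtInner (dbarOp lam j v) (dbarOp lam j v)
      = wgtInner (deltaOp lam j v) (deltaOp lam j v) + (1 - 2 * lam j) * wgtInner v v :=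
    calc wgtInner (dbarOp lam j v) (dbarOp lam j v)
        = wgtInner v (deltaOp lam j (dbarOp lam j v)) :=
          wgtInner_dbarOp_left lam j hv₁ hdbar (hasCompactSupport_dbarOp lam j hvc)
      _ = wgtInner v fun z => dbarOp lam j (deltaOp lam j v) z + (1 - 2 * lam j) * v z := by
          congr with z
          exact deltaOp_dbarOp lam j hv.contDiffAt
      _ = wgtInner v (dbarOp lam j (deltaOp lam j v)) + (1 - 2 * lam j) * wgtInner v v :=
          wgtInner_add_const_mul_right _ hv.continuous hvc (continuous_dbarOp lam j hdelta)
            hv.continuous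
      _ = wgtInner (deltaOp lam j v) (deltaOp lam j v) + (1 - 2 * lam j) * wgtInner v v := by
          rw [wgtInner_dbarOp_right lam j hv₁ hvc hdelta]
  simp only [wgtInner_self] at key
  exact_mod_cast key

theorem mul_integral_norm_sq_le_integral_norm_sq_dbarOp (hv : ContDiff ℝ 2 v)
    (hvc : HasCompactSupport v) :
    (1 - 2 * lam j) * ∫ z, ‖v z‖ ^ 2 * wgt z ≤ ∫ z, ‖dbarOp lam j v z‖ ^ 2 * wgt z := by
  rw [integral_norm_sq_dbarOp lam j hv hvc]
  exact le_add_of_nonneg_left (integral_norm_sq_mul_wgt_nonneg _)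

end DbarDelta

theorem estimate_off_k_general_general {n : ℕ} (lam : Fin n → ℝ) {J : Finset (Fin n)} {r : Fin n}
    (hr : r ∈ J) (hlr : lam r ≤ 0) {v : (Fin n → ℂ) → ℂ} (hv : ContDiff ℝ 2 v)
    (hvc : HasCompactSupport v) :
    ∫ z, ‖v z‖ ^ 2 * wgt z ≤ ∑ j ∈ J, ∫ z, ‖dbarOp lam j v z‖ ^ 2 * wgt z :=
  calc ∫ z, ‖v z‖ ^ 2 * wgt z
      ≤ (1 - 2 * lam r) * ∫ z, ‖v z‖ ^ 2 * wgt z :=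
        le_mul_of_one_le_left (integral_norm_sq_mul_wgt_nonneg v) (by linarith)
    _ ≤ ∫ z, ‖dbarOp lam r v z‖ ^ 2 * wgt z :=
        mul_integral_norm_sq_le_integral_norm_sq_dbarOp lam r hv hvc
    _ ≤ ∑ j ∈ J, ∫ z, ‖dbarOp lam j v z‖ ^ 2 * wgt z :=
        single_le_sum (f := fun j => ∫ z, ‖dbarOp lam j v z‖ ^ 2 * wgt z)
          (fun j _ => integral_norm_sq_mul_wgt_nonneg (dbarOp lam j v)) hr

theorem estimate_off_k_general (n : ℕ) (hn : 1 ≤ n) (lam : Fin n → ℝ) (k : Fin n)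
    (r s : Fin n) (hr : r ≠ k) (hs : s ≠ k) (hlr : lam r < 0) (hls : 0 < lam s)
    (v : (Fin n → ℂ) → ℂ) (hv : ContDiff ℝ (⊤ : ℕ∞) v) (hvcs : HasCompactSupport v) :
    ∫ z : Fin n → ℂ, ‖v z‖ ^ 2 * wgt z
      ≤ ∑ j ∈ Finset.univ.erase k, ∫ z : Fin n → ℂ, ‖dbarOp lam j v z‖ ^ 2 * wgt z :=
  estimate_off_k_general_general lam (mem_erase.2 ⟨hr, mem_univ r⟩) hlr.le
    (contDiff_infty.1 hv 2) hvcs
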